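/- Fix an integer N ≥ 1 and scalars D_0, …, D_{N−1} ∈ K. With the modes and conventions of the context (untwisted bosons b_k, k ∈ ℤ, with b_0 = √ℏ ∂_{x^0}, and Z₂-twisted Ramond fermions ψ_n, n ∈ ℤ, with zero mode ψ_0 = (1/√(2ℏ))(θ^0 + ℏ ∂_{θ^0})), define for i ∈ ℤ_{≥0}: H_i = ℏ ∂_{x^i} + (ℏ/2) Σ_{j∈ℤ} :b_j b_{i+N−1−j}: + (ℏ/2) Σ_{j∈ℤ} (j + (i+N−1)/2) :ψ_{−j} ψ_{i+N−1+j}: + ℏ D_i [i ≤ N−1], and for integers j ≥ 1: F_j = ℏ ∂_{θ^j} + ℏ Σ_{k∈ℤ} b_{j+N−1−k} ψ_k. Then these operators form a representation of a subalgebra of the N=1 super Virasoro algebra in the Ramond sector: for all i, i′ ∈ ℤ_{≥0} and all integers j, j′ ≥ 1, [H_i, H_{i′}] = ℏ (i−i′) H_{i+i′+N−1}, [H_i, F_j] = ℏ ((i−N+1)/2 − j) F_{i+j+N−1}, and {F_j, F_{j′}} = 2ℏ H_{j+j′+N−1}. (This is a super quantum Airy structure with one extra fermionic variable θ^0.) 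-/

import Mathlib

/-!
Statement 9: the μ-twisted free boson–fermion representation of a subalgebra of the N=1
super Virasoro algebra in the Ramond sector. Untwisted bosons `b_k`, `k ∈ ℤ`, act on
`P = K[t,t⁻¹][x⁰,x¹,…]` (with `ℏ = t²`, `√ℏ = t`), Z₂-twisted Ramond fermions `ψ_n`,
`n ∈ ℤ`, with zero mode `ψ₀ = (1/√(2ℏ))(θ⁰ + ℏ∂_{θ⁰})`, act on `Λ(θ⁰,θ¹,…)`.
The resulting super quantum Airy structure has one extra fermionic variable `θ⁰`.
-/

set_option synthInstance.maxHeartbeats 1000000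
set_option maxHeartbeats 1000000

noncomputable section
open TensorProduct

variable (K : Type) [Field K] [CharZero K] (s2 : K)

/-- `R = K[t,t⁻¹]`, with `ℏ = t²`, `√ℏ = t`. -/
abbrev R := LaurentPolynomial K
/-- `ℏ = t² ∈ R`. -/
def hb : R K := LaurentPolynomial.T 2
/-- A scalar `c : K` viewed in `R`. -/
def cs (c : K) : R K := LaurentPolynomial.C c
/-- The even part `P = R[x⁰,x¹,x²,…]`. -/
abbrev Pev := MvPolynomial ℕ (R K)
/-- The odd part `Λ(θ⁰,θ¹,…)`; generators are indexed by `ℕ`. -/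
abbrev Podd := ExteriorAlgebra (R K) (ℕ →₀ R K)
/-- The full carrier `S = P ⊗_R Λ`. -/
abbrev SuperSpace := Pev K ⊗[R K] Podd K

/-- `∂_{x^a}`, acting through the polynomial factor. -/
def dX (a : ℕ) : SuperSpace K → SuperSpace K :=
  LinearMap.rTensor (Podd K) (MvPolynomial.pderiv a).toLinearMap

/-- Multiplication by `x^a`, acting through the polynomial factor. -/
def mX (a : ℕ) : SuperSpace K → SuperSpace K :=
  LinearMap.rTensor (Podd K) (LinearMap.mulLeft (R K) (MvPolynomial.X a))

/-- `∂_{θ^a}` (interior product with the dual basis vector), acting through the odd factor. -/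
def dT (a : ℕ) : SuperSpace K → SuperSpace K :=
  LinearMap.lTensor (Pev K) (CliffordAlgebra.contractLeft (Finsupp.lapply a))

/-- Left multiplication by `θ^a`, acting through the odd factor. -/
def mT (a : ℕ) : SuperSpace K → SuperSpace K :=
  LinearMap.lTensor (Pev K)
    (LinearMap.mulLeft (R K) (ExteriorAlgebra.ι (R K) (Finsupp.single a 1)))

/-- `∂_{x^a}` for `a ∈ ℤ`, vanishing for `a < 0`. -/
def dXi (a : ℤ) : SuperSpace K → SuperSpace K :=
  fun v => if 0 ≤ a then dX K a.toNat v else 0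

/-- `∂_{θ^a}` for `a ∈ ℤ`, vanishing for `a < 1` (used only for the linear terms of `F_j`). -/
def dTi (a : ℤ) : SuperSpace K → SuperSpace K :=
  fun v => if 1 ≤ a then dT K a.toNat v else 0

/-- The untwisted boson mode `b_k`: `b_k = √ℏ ∂_{x^k}` for `k ≥ 0`,
`b_{−k} = (k/√ℏ) x^k` for `k ≥ 1`. -/
def bos (k : ℤ) : SuperSpace K → SuperSpace K :=
  if 0 ≤ k then fun v => (LaurentPolynomial.T 1 : R K) • dX K k.toNat v
  else fun v => (((-k : ℤ) : R K) * LaurentPolynomial.T (-1)) • mX K (-k).toNat v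

/-- The Z₂-twisted (Ramond) fermion mode `ψ_n`: `ψ_n = √ℏ ∂_{θ^n}` and
`ψ_{−n} = (1/√ℏ) θ^n` for `n ≥ 1`, and `ψ₀ = (1/√(2ℏ))(θ⁰ + ℏ∂_{θ⁰})`. -/
def fer (n : ℤ) : SuperSpace K → SuperSpace K :=
  if 1 ≤ n then fun v => (LaurentPolynomial.T 1 : R K) • dT K n.toNat v
  else if n = 0 then fun v =>
    (cs K s2⁻¹ * LaurentPolynomial.T (-1)) • (mT K 0 v + hb K • dT K 0 v)
  else fun v => (LaurentPolynomial.T (-1) : R K) • mT K (-n).toNat v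

/-- The normally ordered boson bilinear `:b_α b_β:`. -/
def nb (α β : ℤ) : SuperSpace K → SuperSpace K :=
  if α ≤ β then fun v => bos K α (bos K β v) else fun v => bos K β (bos K α v)

/-- The normally ordered fermion bilinear `:ψ_α ψ_β:`. -/
def nf (α β : ℤ) : SuperSpace K → SuperSpace K :=
  if α ≤ β then fun v => fer K s2 α (fer K s2 β v)
  else fun v => -(fer K s2 β (fer K s2 α v))

/-- `H_i = ℏ ∂_{x^i} + (ℏ/2) Σ_{j∈ℤ} :b_j b_{i+N−1−j}:
        + (ℏ/2) Σ_{j∈ℤ} (j + (i+N−1)/2) :ψ_{−j} ψ_{i+N−1+j}: + ℏ D_i [i ≤ N−1]`. -/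
def Hop (N : ℤ) (D : ℤ → K) (i : ℤ) : SuperSpace K → SuperSpace K := fun v =>
  hb K • dXi K i v
    + (cs K (2 : K)⁻¹ * hb K) • (∑ᶠ j : ℤ, nb K j (i + N - 1 - j) v)
    + (cs K (2 : K)⁻¹ * hb K) •
        (∑ᶠ j : ℤ, (((2 * j + i + N - 1 : ℤ) : R K) * cs K (2 : K)⁻¹) •
          nf K s2 (-j) (i + N - 1 + j) v)
    + (if i ≤ N - 1 then (hb K * cs K (D i)) • v else 0)

/-- `F_j = ℏ ∂_{θ^j} + ℏ Σ_{k∈ℤ} b_{j+N−1−k} ψ_k`. -/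
def Fop (N : ℤ) (j : ℤ) : SuperSpace K → SuperSpace K := fun v =>
  hb K • dTi K j v + hb K • (∑ᶠ k : ℤ, bos K (j + N - 1 - k) (fer K s2 k v))

/-! ### Abstract oscillator representations -/

structure OscRep (A V : Type) [CommRing A] [AddCommGroup V] [Module A V] where
  b : ℤ → Module.End A V
  ψ : ℤ → Module.End A V
  a : ℕ → Module.End A V
  c : ℕ → Module.End A V
  ε : ℕ → A
  Ω : V
  bb : ∀ m j v, b j (b m v) = b m (b j v) + (if j = -m then (-m : A) else 0) • v
  ψb : ∀ m j v, ψ j (b m v) = b m (ψ j v)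
  ψψ : ∀ m j v, ψ j (ψ m v) = - ψ m (ψ j v) + (if j = -m then (1 : A) else 0) • v
  ba : ∀ (m : ℕ) (j : ℤ) v, b j (a m v) = a m (b j v) + (if j = (m : ℤ) then (1 : A) else 0) • v
  ψa : ∀ (m : ℕ) (j : ℤ) v, ψ j (a m v) = a m (ψ j v)
  ψc : ∀ (m : ℕ) (j : ℤ) v, ψ j (c m v) = - c m (ψ j v) + (if j = (m : ℤ) then ε m else 0) • v
  bc : ∀ (m : ℕ) (j : ℤ) v, b j (c m v) = c m (b j v)
  bΩ : ∀ j, 0 ≤ j → b j Ω = 0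
  ψΩ : ∀ j, 1 ≤ j → ψ j Ω = 0
  cyc : ∀ W : Submodule A V, Ω ∈ W → (∀ k, ∀ v ∈ W, a k v ∈ W) → (∀ k, ∀ v ∈ W, c k v ∈ W) →
    W = ⊤

namespace OscRep
variable {A V : Type} [CommRing A] [AddCommGroup V] [Module A V]

/-- Locally finite sum of endomorphisms. -/
def lsum (f : ℤ → Module.End A V) (hf : ∀ v, (Function.support fun j => f j v).Finite) :
    Module.End A V where
  toFun v := ∑ᶠ j, f j v
  map_add' v w := by
    simp only [map_add]
    exact finsum_add_distrib (hf v) (hf w)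
  map_smul' r v := by
    simp only [map_smul, RingHom.id_apply]
    exact (smul_finsum' r (hf v)).symm

theorem lsum_comm (f : ℤ → Module.End A V) (hf : ∀ v, (Function.support fun j => f j v).Finite)
    (T : Module.End A V) (u : ℤ → V) (v w : V) (hu : (Function.support u).Finite)
    (h : ∀ j, f j w = T (f j v) + u j) :
    lsum f hf w = T (lsum f hf v) + ∑ᶠ j, u j := by
  have h2 : (Function.support fun j => T (f j v)).Finite :=
    (hf v).subset (fun j hj => by
      simp only [Function.mem_support] at hj ⊢
      intro h0; rw [h0, map_zero] at hj; exact hj rfl)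
  show (∑ᶠ j, f j w) = T (∑ᶠ j, f j v) + ∑ᶠ j, u j
  have h3 : T (∑ᶠ j, f j v) = ∑ᶠ j, T (f j v) := T.toAddMonoidHom.map_finsum (hf v)
  rw [h3, ← finsum_add_distrib h2 hu]
  exact finsum_congr h

theorem fin_one (p : ℤ) (u : V) : (Function.support fun j : ℤ => if j = p then u else 0).Finite :=
  (Set.finite_singleton p).subset (fun j hj => by
    by_contra h; exact hj (if_neg h))

theorem sum_one (p : ℤ) (u : V) : (∑ᶠ j : ℤ, if j = p then u else 0) = u := by
  rw [finsum_eq_single _ p (fun x hx => if_neg hx), if_pos rfl]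

theorem fin_two (p q : ℤ) (u w : V) :
    (Function.support fun j : ℤ => (if j = p then u else 0) + (if j = q then w else 0)).Finite :=
  ((fin_one p u).union (fin_one q w)).subset (Function.support_add _ _)

theorem sum_two (p q : ℤ) (u w : V) :
    (∑ᶠ j : ℤ, ((if j = p then u else 0) + (if j = q then w else 0))) = u + w := by
  rw [finsum_add_distrib (fin_one p u) (fin_one q w), sum_one, sum_one]

variable (O : OscRep A V)

structure IsB (T : Module.End A V) (k : ℤ) (t : A) : Prop where
  b : ∀ j v, O.b j (T v) = T (O.b j v) + (if j = k then t else 0) • v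
  ψ : ∀ j v, O.ψ j (T v) = T (O.ψ j v)

structure IsF (T : Module.End A V) (k : ℤ) (t : A) : Prop where
  ψ : ∀ j v, O.ψ j (T v) = - T (O.ψ j v) + (if j = k then t else 0) • v
  b : ∀ j v, O.b j (T v) = T (O.b j v)

theorem isB_b (m : ℤ) : O.IsB (O.b m) (-m) (-m) := ⟨O.bb m, O.ψb m⟩
theorem isB_a (m : ℕ) : O.IsB (O.a m) m 1 := ⟨O.ba m, O.ψa m⟩
theorem isF_ψ (m : ℤ) : O.IsF (O.ψ m) (-m) 1 := ⟨O.ψψ m, fun j v => (O.ψb j m v).symm⟩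
theorem isF_c (m : ℕ) : O.IsF (O.c m) m (O.ε m) := ⟨O.ψc m, O.bc m⟩

theorem ind (P : V → Prop) (h0 : P 0) (hadd : ∀ v w, P v → P w → P (v + w))
    (hs : ∀ (r : A) v, P v → P (r • v)) (hΩ : P O.Ω) (ha : ∀ k v, P v → P (O.a k v))
    (hc : ∀ k v, P v → P (O.c k v)) (v : V) : P v := by
  have := O.cyc ⟨⟨⟨{v | P v}, fun {v w} => hadd v w⟩, h0⟩, fun r {v} => hs r v⟩ hΩ ha hc
  have h : v ∈ (⊤ : Submodule A V) := trivial
  rw [← this] at h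
  exact h

theorem locfin (v : V) : ∃ M : ℤ, ∀ k, M ≤ k → O.b k v = 0 ∧ O.ψ k v = 0 := by
  induction v using O.ind with
  | h0 => exact ⟨0, fun k _ => by simp⟩
  | hadd v w hv hw =>
    obtain ⟨M, hM⟩ := hv
    obtain ⟨M', hM'⟩ := hw
    refine ⟨max M M', fun k hk => ?_⟩
    have h1 := hM k (by omega)
    have h2 := hM' k (by omega)
    simp [h1, h2]
  | hs r v hv =>
    obtain ⟨M, hM⟩ := hv
    refine ⟨M, fun k hk => ?_⟩
    simp [hM k hk]
  | hΩ => exact ⟨1, fun k hk => ⟨O.bΩ k (by omega), O.ψΩ k hk⟩⟩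
  | ha m v hv =>
    obtain ⟨M, hM⟩ := hv
    refine ⟨max M (m + 1), fun k hk => ?_⟩
    have h1 := hM k (by omega)
    rw [O.ba, O.ψa, if_neg (by omega)]
    simp [h1]
  | hc m v hv =>
    obtain ⟨M, hM⟩ := hv
    refine ⟨max M (m + 1), fun k hk => ?_⟩
    have h1 := hM k (by omega)
    rw [O.bc, O.ψc, if_neg (by omega)]
    simp [h1]

/-- normally ordered bilinears -/
def nbl (α β : ℤ) : Module.End A V := if α ≤ β then O.b α * O.b β else O.b β * O.b α
def nfl (α β : ℤ) : Module.End A V := if α ≤ β then O.ψ α * O.ψ β else -(O.ψ β * O.ψ α)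

theorem fin_of (f : ℤ → V) (p q : ℤ) (h : ∀ j, p ≤ j → f j = 0) (h' : ∀ j, j ≤ q → f j = 0) :
    (Function.support f).Finite :=
  (Set.finite_Ioo q p).subset (fun j hj => by
    constructor
    · by_contra hh; exact hj (h' j (by omega))
    · by_contra hh; exact hj (h j (by omega)))

theorem nbl_fin (n : ℤ) (v : V) : (Function.support fun j => O.nbl j (n - j) v).Finite := by
  obtain ⟨M, hM⟩ := O.locfin v
  apply fin_of _ (max M (n + 1) + |n|) (min (n - M) (-1) - |n|)
  · intro j hj
    have := abs_nonneg n; have := le_abs_self n; have := neg_abs_le n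
    unfold nbl
    rw [if_neg (by omega)]
    simp [(hM j (by omega)).1]
  · intro j hj
    have := abs_nonneg n; have := le_abs_self n; have := neg_abs_le n
    unfold nbl
    rw [if_pos (by omega)]
    simp [(hM (n - j) (by omega)).1]

theorem nfl_fin (n : ℤ) (v : V) :
    (Function.support fun j => (((2 * j + n : ℤ) : A) • O.nfl (-j) (n + j)) v).Finite := by
  obtain ⟨M, hM⟩ := O.locfin v
  apply fin_of _ (max (M - n) 1 + |n|) (min (- M) (-1) - |n|)
  · intro j hj
    have := abs_nonneg n; have := le_abs_self n; have := neg_abs_le n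
    unfold nfl
    rw [if_pos (by omega)]
    simp [(hM (n + j) (by omega)).2]
  · intro j hj
    have := abs_nonneg n; have := le_abs_self n; have := neg_abs_le n
    unfold nfl
    rw [if_neg (by omega)]
    simp [(hM (-j) (by omega)).2]

theorem g_fin (n : ℤ) (v : V) : (Function.support fun k => (O.b (n - k) * O.ψ k) v).Finite := by
  obtain ⟨M, hM⟩ := O.locfin v
  apply fin_of _ M (n - M)
  · intro j hj
    simp [(hM j (by omega)).2]
  · intro j hj
    rw [Module.End.mul_apply, ← O.ψb]
    simp [(hM (n - j) (by omega)).1]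

def LB (n : ℤ) : Module.End A V := lsum (fun j => O.nbl j (n - j)) (O.nbl_fin n)
def LF (n : ℤ) : Module.End A V :=
  lsum (fun j => ((2 * j + n : ℤ) : A) • O.nfl (-j) (n + j)) (O.nfl_fin n)
def G (n : ℤ) : Module.End A V := lsum (fun k => O.b (n - k) * O.ψ k) (O.g_fin n)
/-- four times the Virasoro generator -/
def Q (n : ℤ) : Module.End A V := (2 : A) • O.LB n + O.LF n

variable {O}

theorem IsB.nbl {T : Module.End A V} {k : ℤ} {t : A} (h : O.IsB T k t) (α β : ℤ) (v : V) :
    O.nbl α β (T v) = T (O.nbl α β v) + ((if α = k then t • O.b β v else 0)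
      + (if β = k then t • O.b α v else 0)) := by
  unfold OscRep.nbl
  split_ifs <;> simp [h.b, *] <;> module

theorem IsB.nfl {T : Module.End A V} {k : ℤ} {t : A} (h : O.IsB T k t) (α β : ℤ) (v : V) :
    O.nfl α β (T v) = T (O.nfl α β v) := by
  unfold OscRep.nfl
  split_ifs <;> simp [h.ψ]

theorem IsF.nbl {T : Module.End A V} {k : ℤ} {t : A} (h : O.IsF T k t) (α β : ℤ) (v : V) :
    O.nbl α β (T v) = T (O.nbl α β v) := by
  unfold OscRep.nbl
  split_ifs <;> simp [h.b]

theorem IsF.nfl {T : Module.End A V} {k : ℤ} {t : A} (h : O.IsF T k t) (α β : ℤ) (v : V) :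
    O.nfl α β (T v) = T (O.nfl α β v) + ((if β = k then t • O.ψ α v else 0)
      + (if α = k then -(t • O.ψ β v) else 0)) := by
  unfold OscRep.nfl
  split_ifs <;> simp [h.ψ, *] <;> module

theorem IsB.LB {T : Module.End A V} {k : ℤ} {t : A} (h : O.IsB T k t) (n : ℤ) (v : V) :
    O.LB n (T v) = T (O.LB n v) + (2 * t) • O.b (n - k) v := by
  have := lsum_comm (fun j => O.nbl j (n - j)) (O.nbl_fin n) T
    (fun j => (if j = k then t • O.b (n - k) v else 0) +
      (if j = n - k then t • O.b (n - k) v else 0)) v (T v) (fin_two _ _ _ _) (fun j => by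
        rw [h.nbl]
        congr 2
        · split_ifs with hh
          · rw [hh]
          · rfl
        · by_cases hh : j = n - k
          · rw [if_pos (by omega), if_pos hh, hh]
          · rw [if_neg (by omega), if_neg hh])
  unfold OscRep.LB
  rw [this, sum_two]
  module

theorem IsB.LF {T : Module.End A V} {k : ℤ} {t : A} (h : O.IsB T k t) (n : ℤ) (v : V) :
    O.LF n (T v) = T (O.LF n v) := by
  have := lsum_comm (fun j => ((2 * j + n : ℤ) : A) • O.nfl (-j) (n + j)) (O.nfl_fin n) T
    (fun j => 0) v (T v) (by simp) (fun j => by simp [h.nfl])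
  unfold OscRep.LF
  rw [this]
  simp

theorem IsF.LB {T : Module.End A V} {k : ℤ} {t : A} (h : O.IsF T k t) (n : ℤ) (v : V) :
    O.LB n (T v) = T (O.LB n v) := by
  have := lsum_comm (fun j => O.nbl j (n - j)) (O.nbl_fin n) T
    (fun j => 0) v (T v) (by simp) (fun j => by simp [h.nbl])
  unfold OscRep.LB
  rw [this]
  simp

theorem IsF.LF {T : Module.End A V} {k : ℤ} {t : A} (h : O.IsF T k t) (n : ℤ) (v : V) :
    O.LF n (T v) = T (O.LF n v) + (2 * (2 * k - n) * t) • O.ψ (n - k) v := by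
  have := lsum_comm (fun j => ((2 * j + n : ℤ) : A) • O.nfl (-j) (n + j)) (O.nfl_fin n) T
    (fun j => (if j = k - n then ((2 * k - n) * t) • O.ψ (n - k) v else 0) +
      (if j = - k then ((2 * k - n) * t) • O.ψ (n - k) v else 0)) v (T v) (fin_two _ _ _ _) (fun j => by
        simp only [LinearMap.smul_apply]
        rw [h.nfl, smul_add, smul_add, map_smul]
        congr 2
        · by_cases hh : j = k - n
          · rw [if_pos (by omega), if_pos hh, hh, neg_sub]
            push_cast
            module
          · rw [if_neg (by omega), if_neg hh, smul_zero]
        · by_cases hh : j = - k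
          · rw [if_pos (by omega), if_pos hh, hh, ← sub_eq_add_neg]
            push_cast
            module
          · rw [if_neg (by omega), if_neg hh, smul_zero])
  unfold OscRep.LF
  rw [this, sum_two]
  module

theorem IsB.G {T : Module.End A V} {k : ℤ} {t : A} (h : O.IsB T k t) (n : ℤ) (v : V) :
    O.G n (T v) = T (O.G n v) + t • O.ψ (n - k) v := by
  have := lsum_comm (fun k => O.b (n - k) * O.ψ k) (O.g_fin n) T
    (fun j => (if j = n - k then t • O.ψ (n - k) v else 0)) v (T v) (fin_one _ _) (fun j => by
        simp only [Module.End.mul_apply]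
        rw [h.ψ, h.b]
        congr 1
        by_cases hh : j = n - k
        · rw [if_pos (by omega), if_pos hh, hh]
        · rw [if_neg (by omega), if_neg hh, zero_smul])
  unfold OscRep.G
  rw [this, sum_one]

theorem IsF.G {T : Module.End A V} {k : ℤ} {t : A} (h : O.IsF T k t) (n : ℤ) (v : V) :
    O.G n (T v) = - T (O.G n v) + t • O.b (n - k) v := by
  have := lsum_comm (fun k => O.b (n - k) * O.ψ k) (O.g_fin n) (-T)
    (fun j => (if j = k then t • O.b (n - k) v else 0)) v (T v) (fin_one _ _) (fun j => by
        simp only [Module.End.mul_apply, LinearMap.neg_apply]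
        rw [h.ψ, map_add, map_neg, h.b]
        congr 1
        by_cases hh : j = k
        · rw [if_pos hh, if_pos hh, hh, map_smul]
        · rw [if_neg hh, if_neg hh, zero_smul, map_zero])
  unfold OscRep.G
  rw [this, sum_one, LinearMap.neg_apply]

theorem IsB.Q {T : Module.End A V} {k : ℤ} {t : A} (h : O.IsB T k t) (n : ℤ) (v : V) :
    O.Q n (T v) = T (O.Q n v) + (4 * t) • O.b (n - k) v := by
  simp only [OscRep.Q, LinearMap.add_apply, LinearMap.smul_apply, h.LB, h.LF, map_add, map_smul]
  module

theorem IsF.Q {T : Module.End A V} {k : ℤ} {t : A} (h : O.IsF T k t) (n : ℤ) (v : V) :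
    O.Q n (T v) = T (O.Q n v) + (2 * (2 * k - n) * t) • O.ψ (n - k) v := by
  simp only [OscRep.Q, LinearMap.add_apply, LinearMap.smul_apply, h.LB, h.LF, map_add, map_smul]
  module

variable (O)

theorem Qb (n m : ℤ) (v : V) : O.Q n (O.b m v) = O.b m (O.Q n v) - (4 * m : A) • O.b (n + m) v := by
  rw [(O.isB_b m).Q, sub_neg_eq_add]; module
theorem Qψ (n m : ℤ) (v : V) :
    O.Q n (O.ψ m v) = O.ψ m (O.Q n v) - (4 * m + 2 * n : A) • O.ψ (n + m) v := by
  rw [(O.isF_ψ m).Q, sub_neg_eq_add]; push_cast; module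
theorem Gb (n m : ℤ) (v : V) : O.G n (O.b m v) = O.b m (O.G n v) - (m : A) • O.ψ (n + m) v := by
  rw [(O.isB_b m).G, sub_neg_eq_add]; module
theorem Gψ (n m : ℤ) (v : V) : O.G n (O.ψ m v) = - O.ψ m (O.G n v) + O.b (n + m) v := by
  rw [(O.isF_ψ m).G, sub_neg_eq_add]; module

theorem QΩ (n : ℤ) (hn : 0 ≤ n) : O.Q n O.Ω = 0 := by
  have h1 : O.LB n O.Ω = 0 := by
    refine (finsum_congr (g := fun _ => 0) fun j => ?_).trans finsum_zero
    simp only [nbl]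
    split_ifs
    · simp [O.bΩ (n - j) (by omega)]
    · simp [O.bΩ j (by omega)]
  have h2 : O.LF n O.Ω = 0 := by
    refine (finsum_congr (g := fun _ => 0) fun j => ?_).trans finsum_zero
    by_cases hz : 2 * j + n = 0
    · simp [hz]
    simp only [nfl]
    split_ifs
    · simp [O.ψΩ (n + j) (by omega)]
    · simp [O.ψΩ (-j) (by omega)]
  simp [Q, h1, h2]

theorem GΩ (n : ℤ) (hn : 0 ≤ n) : O.G n O.Ω = 0 := by
  refine (finsum_congr (g := fun _ => 0) fun j => ?_).trans finsum_zero
  rw [Module.End.mul_apply]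
  by_cases hj : 1 ≤ j
  · simp [O.ψΩ j hj]
  · rw [← O.ψb]; simp [O.bΩ (n - j) (by omega)]

theorem QQ (n m : ℤ) (hn : 0 ≤ n) (hm : 0 ≤ m) (v : V) :
    O.Q n (O.Q m v) = O.Q m (O.Q n v) + (4 * (n - m) : A) • O.Q (n + m) v := by
  induction v using O.ind with
  | h0 => simp
  | hadd v w hv hw => simp only [map_add, hv, hw]; module
  | hs r v hv => simp only [map_smul, hv]; module
  | hΩ => simp [O.QΩ _ hn, O.QΩ _ hm, O.QΩ _ (add_nonneg hn hm)]
  | ha k v hv =>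
    have e1 : n + (m - k) = n + m - k := by ring
    have e2 : m + (n - k) = n + m - k := by ring
    simp only [(O.isB_a k).Q, map_add, map_smul, hv, Qb, e1, e2]
    push_cast
    module
  | hc k v hv =>
    have e1 : n + (m - k) = n + m - k := by ring
    have e2 : m + (n - k) = n + m - k := by ring
    simp only [(O.isF_c k).Q, map_add, map_smul, hv, Qψ, e1, e2]
    push_cast
    module

theorem QG (n m : ℤ) (hn : 0 ≤ n) (hm : 0 ≤ m) (v : V) :
    O.Q n (O.G m v) = O.G m (O.Q n v) + (2 * n - 4 * m : A) • O.G (n + m) v := by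
  induction v using O.ind with
  | h0 => simp
  | hadd v w hv hw => simp only [map_add, hv, hw]; module
  | hs r v hv => simp only [map_smul, hv]; module
  | hΩ => simp [O.QΩ _ hn, O.GΩ _ hm, O.GΩ _ (add_nonneg hn hm)]
  | ha k v hv =>
    have e1 : n + (m - k) = n + m - k := by ring
    have e2 : m + (n - k) = n + m - k := by ring
    simp only [(O.isB_a k).Q, (O.isB_a k).G, map_add, map_smul, hv, Qb, Gb, Qψ, e1, e2]
    push_cast
    module
  | hc k v hv =>
    have e1 : n + (m - k) = n + m - k := by ring
    have e2 : m + (n - k) = n + m - k := by ring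
    simp only [(O.isF_c k).Q, (O.isF_c k).G, map_add, map_neg, map_smul, hv, Qb, Qψ, Gψ, e1, e2]
    push_cast
    module

theorem GG (n m : ℤ) (hn : 0 ≤ n) (hm : 0 ≤ m) (v : V) :
    (2 : A) • O.G n (O.G m v) + (2 : A) • O.G m (O.G n v) = O.Q (n + m) v := by
  induction v using O.ind with
  | h0 => simp
  | hadd v w hv hw => simp only [map_add, ← hv, ← hw]; module
  | hs r v hv => simp only [map_smul, ← hv]; module
  | hΩ => simp [O.GΩ _ hn, O.GΩ _ hm, O.QΩ _ (add_nonneg hn hm)]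
  | ha k v hv =>
    have e1 : n + (m - k) = n + m - k := by ring
    have e2 : m + (n - k) = n + m - k := by ring
    simp only [(O.isB_a k).Q, (O.isB_a k).G, map_add, map_smul, ← hv, Gb, Gψ, e1, e2]
    push_cast
    module
  | hc k v hv =>
    have e1 : n + (m - k) = n + m - k := by ring
    have e2 : m + (n - k) = n + m - k := by ring
    simp only [(O.isF_c k).Q, (O.isF_c k).G, map_add, map_neg, map_smul, ← hv, Gb, Gψ, e1, e2]
    push_cast
    module

section final
variable (h s q : A) (N : ℤ) (d : ℤ → A)

def Hl (i : ℤ) : Module.End A V := h • (s • O.b i + q • O.Q (i + N - 1) + d i • 1)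
def Fl (j : ℤ) : Module.End A V := h • (s • O.ψ j + O.G (j + N - 1))

theorem HH (hq : 4 * q = 1) (hN : 1 ≤ N) (hd : ∀ i, N ≤ i → d i = 0) (i i' : ℤ) (hi : 0 ≤ i)
    (hi' : 0 ≤ i') (v : V) :
    O.Hl h s q N d i (O.Hl h s q N d i' v) - O.Hl h s q N d i' (O.Hl h s q N d i v)
      = (h * ((i - i' : ℤ) : A)) • O.Hl h s q N d (i + i' + N - 1) v := by
  have hdd : ((i - i' : ℤ) : A) * d (i + i' + N - 1) = 0 := by
    by_cases h0 : i = i'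
    · simp [h0]
    · rw [hd _ (by omega), mul_zero]
  have e1 : i + N - 1 + i' = i + i' + N - 1 := by ring
  have e2 : i' + N - 1 + i = i + i' + N - 1 := by ring
  have e3 : i + N - 1 + (i' + N - 1) = i + i' + N - 1 + N - 1 := by ring
  simp only [Hl, LinearMap.add_apply, LinearMap.smul_apply, map_add, map_smul, Module.End.one_apply,
    Qb, O.QQ (i + N - 1) (i' + N - 1) (by omega) (by omega), O.bb i' i, e1, e2, e3]
  have hbb : (if i = -i' then (-(i' : A)) else 0) = 0 := by
    split_ifs
    · have : i' = 0 := by omega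
      simp [this]
    · rfl
  rw [hbb]
  push_cast at hdd ⊢
  linear_combination (norm := module) (h ^ 2 * s * (i - i') * hq) • O.b (i + i' + N - 1) v
    + (h ^ 2 * q * (i - i') * hq) • O.Q (i + i' + N - 1 + N - 1) v
    - (h ^ 2 * hdd) • v

theorem HF (hq : 4 * q = 1) (hN : 1 ≤ N) (i j : ℤ) (hi : 0 ≤ i)
    (hj : 1 ≤ j) (v : V) (half : A) (hh : 2 * half = 1) :
    O.Hl h s q N d i (O.Fl h s N j v) - O.Fl h s N j (O.Hl h s q N d i v)
      = (h * ((i - N + 1 - 2 * j : ℤ) : A) * half) • O.Fl h s N (i + j + N - 1) v := by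
  have e1 : i + N - 1 + j = i + j + N - 1 := by ring
  have e2 : j + N - 1 + i = i + j + N - 1 := by ring
  have e3 : i + N - 1 + (j + N - 1) = i + j + N - 1 + N - 1 := by ring
  simp only [Hl, Fl, LinearMap.add_apply, LinearMap.smul_apply, map_add, map_smul,
    Module.End.one_apply, Gb, Qψ, O.ψb,
    O.QG (i + N - 1) (j + N - 1) (by omega) (by omega), e1, e2, e3]
  push_cast
  have hq2 : half = 2 * q := by linear_combination half * (-hq) + 2 * q * hh
  rw [hq2]
  linear_combination (norm := module) (- h ^ 2 * s * i * hq) • O.ψ (i + j + N - 1) v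

theorem FF (hq : 4 * q = 1) (hN : 1 ≤ N) (hd : ∀ i, N ≤ i → d i = 0) (j j' : ℤ) (hj : 1 ≤ j)
    (hj' : 1 ≤ j') (v : V) (half : A) (hh : 2 * half = 1) :
    O.Fl h s N j (O.Fl h s N j' v) + O.Fl h s N j' (O.Fl h s N j v)
      = (2 * h) • O.Hl h s q N d (j + j' + N - 1) v := by
  have e1 : j + N - 1 + j' = j + j' + N - 1 := by ring
  have e2 : j' + N - 1 + j = j + j' + N - 1 := by ring
  have e3 : j + N - 1 + (j' + N - 1) = j + j' + N - 1 + N - 1 := by ring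
  simp only [Hl, Fl, LinearMap.add_apply, LinearMap.smul_apply, map_add, map_smul,
    Module.End.one_apply, Gψ, O.ψψ j' j, if_neg (show ¬ j = -j' by omega), hd (j + j' + N - 1) (by omega),
    ← e3, ← O.GG (j + N - 1) (j' + N - 1) (by omega) (by omega), e1, e2]
  linear_combination (norm := module) (- h ^ 2 * hq) • O.G (j + N - 1) (O.G (j' + N - 1) v)
    + (- h ^ 2 * hq) • O.G (j' + N - 1) (O.G (j + N - 1) v)
end final

end OscRep

/-! ### The concrete operators as linear endomorphisms -/

set_option linter.unusedSectionVars false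
section generic

theorem pderiv_swap {A : Type} [CommRing A] (a c : ℕ) (p : MvPolynomial ℕ A) :
    MvPolynomial.pderiv a (MvPolynomial.pderiv c p)
      = MvPolynomial.pderiv c (MvPolynomial.pderiv a p) := by
  have h : ⁅MvPolynomial.pderiv (R := A) a, MvPolynomial.pderiv (R := A) c⁆ = 0 := by
    apply MvPolynomial.derivation_ext
    intro i
    rw [Derivation.commutator_apply, MvPolynomial.pderiv_X, MvPolynomial.pderiv_X]
    simp only [Pi.single_apply]
    split_ifs <;> simp
  have h2 := congrArg (fun d => d p) h
  simp only [Derivation.commutator_apply, Derivation.zero_apply] at h2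
  exact sub_eq_zero.mp h2

theorem aux_fer {A V : Type} [CommRing A] [AddCommGroup V] [Module A V] (x y : V) (c p m : A)
    (h : p * m = 1) : (c * m) • (y + (p * p) • x) = (c * p) • x + (c * m) • y := by
  linear_combination (norm := module) (c * p * h) • x

theorem aux_hop {A V : Type} [CommRing A] [AddCommGroup V] [Module A V] (x y z v : V)
    (h t c d : A) (hc : 2 * c = 1) :
    h • t • x + (c * h) • y + (c * h) • c • z + (h * d) • v
      = h • (t • x + (c * c) • ((2 : A) • y + z) + d • v) := by
  linear_combination (norm := module) (- h * c * hc) • y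

section fermion
variable {A : Type} [CommRing A]

def gdT (a : ℕ) : Module.End A (MvPolynomial ℕ A ⊗[A] ExteriorAlgebra A (ℕ →₀ A)) :=
  LinearMap.lTensor (MvPolynomial ℕ A) (CliffordAlgebra.contractLeft (Finsupp.lapply a))
def gmT (a : ℕ) : Module.End A (MvPolynomial ℕ A ⊗[A] ExteriorAlgebra A (ℕ →₀ A)) :=
  LinearMap.lTensor (MvPolynomial ℕ A)
    (LinearMap.mulLeft A (ExteriorAlgebra.ι A (Finsupp.single a 1)))

theorem gdT_tmul (a : ℕ) (p : MvPolynomial ℕ A) (l : ExteriorAlgebra A (ℕ →₀ A)) :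
    gdT a (p ⊗ₜ l) = p ⊗ₜ (CliffordAlgebra.contractLeft (Q := 0) (Finsupp.lapply a) l) := rfl
theorem gmT_tmul (a : ℕ) (p : MvPolynomial ℕ A) (l : ExteriorAlgebra A (ℕ →₀ A)) :
    gmT a (p ⊗ₜ l) = p ⊗ₜ (ExteriorAlgebra.ι A (Finsupp.single a 1) * l) := rfl

theorem gend_ext {f g : Module.End A (MvPolynomial ℕ A ⊗[A] ExteriorAlgebra A (ℕ →₀ A))}
    (h : ∀ (p : MvPolynomial ℕ A) (l : ExteriorAlgebra A (ℕ →₀ A)), f (p ⊗ₜ l) = g (p ⊗ₜ l))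
    (v : MvPolynomial ℕ A ⊗[A] ExteriorAlgebra A (ℕ →₀ A)) : f v = g v := by
  have : f = g := TensorProduct.ext' h
  rw [this]

theorem gmm_T (a c : ℕ) (v : MvPolynomial ℕ A ⊗[A] ExteriorAlgebra A (ℕ →₀ A)) :
    gmT a (gmT c v) = - gmT c (gmT a v) := by
  refine gend_ext (f := gmT a * gmT c) (g := - (gmT c * gmT a)) (fun p l => ?_) v
  simp only [Module.End.mul_apply, gmT_tmul, LinearMap.neg_apply]
  rw [← TensorProduct.tmul_neg, ← mul_assoc, ← mul_assoc, ← neg_mul]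
  congr 2
  exact eq_neg_of_add_eq_zero_left (ExteriorAlgebra.ι_add_mul_swap _ _)

theorem gdd_T (a c : ℕ) (v : MvPolynomial ℕ A ⊗[A] ExteriorAlgebra A (ℕ →₀ A)) :
    gdT a (gdT c v) = - gdT c (gdT a v) := by
  refine gend_ext (f := gdT a * gdT c) (g := - (gdT c * gdT a)) (fun p l => ?_) v
  simp only [Module.End.mul_apply, gdT_tmul, LinearMap.neg_apply]
  rw [← TensorProduct.tmul_neg, CliffordAlgebra.contractLeft_comm]

theorem gdm_T (a c : ℕ) (v : MvPolynomial ℕ A ⊗[A] ExteriorAlgebra A (ℕ →₀ A)) :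
    gdT a (gmT c v) = - gmT c (gdT a v) + (if a = c then (1 : A) else 0) • v := by
  refine gend_ext (f := gdT a * gmT c)
    (g := - (gmT c * gdT a) + (if a = c then (1 : A) else 0) • 1) (fun p l => ?_) v
  simp only [Module.End.mul_apply, gmT_tmul, gdT_tmul, LinearMap.add_apply, LinearMap.smul_apply,
    Module.End.one_apply, LinearMap.neg_apply]
  rw [ExteriorAlgebra.ι, CliffordAlgebra.contractLeft_ι_mul, ← TensorProduct.tmul_neg,
    ← TensorProduct.tmul_smul, ← TensorProduct.tmul_add, Finsupp.lapply_apply,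
    Finsupp.single_apply]
  congr 1
  simp only [eq_comm (a := c) (b := a)]
  abel

end fermion
end generic

section concrete

def dXl (a : ℕ) : Module.End (R K) (SuperSpace K) :=
  LinearMap.rTensor (Podd K) (MvPolynomial.pderiv a).toLinearMap
def mXl (a : ℕ) : Module.End (R K) (SuperSpace K) :=
  LinearMap.rTensor (Podd K) (LinearMap.mulLeft (R K) (MvPolynomial.X a))
def dTl (a : ℕ) : Module.End (R K) (SuperSpace K) :=
  LinearMap.lTensor (Pev K) (CliffordAlgebra.contractLeft (Finsupp.lapply a))
def mTl (a : ℕ) : Module.End (R K) (SuperSpace K) :=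
  LinearMap.lTensor (Pev K)
    (LinearMap.mulLeft (R K) (ExteriorAlgebra.ι (R K) (Finsupp.single a 1)))

theorem dXl_tmul (a : ℕ) (p : Pev K) (l : Podd K) :
    dXl K a (p ⊗ₜ l) = (MvPolynomial.pderiv a p) ⊗ₜ l := rfl
theorem mXl_tmul (a : ℕ) (p : Pev K) (l : Podd K) :
    mXl K a (p ⊗ₜ l) = (MvPolynomial.X a * p) ⊗ₜ l := rfl
theorem dTl_tmul (a : ℕ) (p : Pev K) (l : Podd K) :
    dTl K a (p ⊗ₜ l) = p ⊗ₜ (CliffordAlgebra.contractLeft (Q := 0) (Finsupp.lapply a) l) := rfl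
theorem mTl_tmul (a : ℕ) (p : Pev K) (l : Podd K) :
    mTl K a (p ⊗ₜ l) = p ⊗ₜ (ExteriorAlgebra.ι (R K) (Finsupp.single a 1) * l) := rfl

theorem end_ext {f g : Module.End (R K) (SuperSpace K)}
    (h : ∀ (p : Pev K) (l : Podd K), f (p ⊗ₜ l) = g (p ⊗ₜ l)) (v : SuperSpace K) : f v = g v := by
  have : f = g := TensorProduct.ext' h
  rw [this]

theorem dd_X (a c : ℕ) (v : SuperSpace K) : dXl K a (dXl K c v) = dXl K c (dXl K a v) := by
  refine end_ext K (f := dXl K a * dXl K c) (g := dXl K c * dXl K a) (fun p l => ?_) v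
  simp only [Module.End.mul_apply, dXl_tmul]
  rw [pderiv_swap]

theorem mm_X (a c : ℕ) (v : SuperSpace K) : mXl K a (mXl K c v) = mXl K c (mXl K a v) := by
  refine end_ext K (f := mXl K a * mXl K c) (g := mXl K c * mXl K a) (fun p l => ?_) v
  simp only [Module.End.mul_apply, mXl_tmul]
  rw [mul_left_comm]

theorem dm_X (a c : ℕ) (v : SuperSpace K) :
    dXl K a (mXl K c v) = mXl K c (dXl K a v) + (if a = c then (1 : R K) else 0) • v := by
  refine end_ext K (f := dXl K a * mXl K c)
    (g := mXl K c * dXl K a + (if a = c then (1 : R K) else 0) • 1) (fun p l => ?_) v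
  simp only [Module.End.mul_apply, mXl_tmul, dXl_tmul, LinearMap.add_apply, LinearMap.smul_apply,
    Module.End.one_apply]
  rw [Derivation.leibniz, TensorProduct.add_tmul]
  simp only [smul_eq_mul]
  congr 1
  by_cases h : a = c
  · subst h; simp
  · rw [MvPolynomial.pderiv_X_of_ne (by tauto)]; simp [h]

theorem mm_T (a c : ℕ) (v : SuperSpace K) : mTl K a (mTl K c v) = - mTl K c (mTl K a v) :=
  gmm_T (A := R K) a c v

theorem dd_T (a c : ℕ) (v : SuperSpace K) : dTl K a (dTl K c v) = - dTl K c (dTl K a v) :=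
  gdd_T (A := R K) a c v

theorem dm_T (a c : ℕ) (v : SuperSpace K) :
    dTl K a (mTl K c v) = - mTl K c (dTl K a v) + (if a = c then (1 : R K) else 0) • v :=
  gdm_T (A := R K) a c v

theorem dX_dT (a c : ℕ) (v : SuperSpace K) : dTl K a (dXl K c v) = dXl K c (dTl K a v) :=
  end_ext K (f := dTl K a * dXl K c) (g := dXl K c * dTl K a) (fun _ _ => rfl) v
theorem mX_dT (a c : ℕ) (v : SuperSpace K) : dTl K a (mXl K c v) = mXl K c (dTl K a v) :=
  end_ext K (f := dTl K a * mXl K c) (g := mXl K c * dTl K a) (fun _ _ => rfl) v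
theorem dX_mT (a c : ℕ) (v : SuperSpace K) : mTl K a (dXl K c v) = dXl K c (mTl K a v) :=
  end_ext K (f := mTl K a * dXl K c) (g := dXl K c * mTl K a) (fun _ _ => rfl) v
theorem mX_mT (a c : ℕ) (v : SuperSpace K) : mTl K a (mXl K c v) = mXl K c (mTl K a v) :=
  end_ext K (f := mTl K a * mXl K c) (g := mXl K c * mTl K a) (fun _ _ => rfl) v

theorem cyc_aux (W : Submodule (R K) (SuperSpace K)) (h0 : (1 : Pev K) ⊗ₜ (1 : Podd K) ∈ W)
    (hX : ∀ k, ∀ v ∈ W, mXl K k v ∈ W) (hT : ∀ k, ∀ v ∈ W, mTl K k v ∈ W) : W = ⊤ := by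
  have h1 : ∀ l : Podd K, (1 : Pev K) ⊗ₜ l ∈ W := by
    intro l
    induction l using CliffordAlgebra.left_induction with
    | algebraMap r =>
      rw [Algebra.algebraMap_eq_smul_one, TensorProduct.tmul_smul]
      exact W.smul_mem _ h0
    | add x y hx hy => rw [TensorProduct.tmul_add]; exact W.add_mem hx hy
    | ι_mul x m hx =>
      induction m using Finsupp.induction_linear with
      | zero => rw [map_zero, zero_mul, TensorProduct.tmul_zero]; exact W.zero_mem
      | add f g hf hg =>
        rw [map_add, add_mul, TensorProduct.tmul_add]; exact W.add_mem hf hg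
      | single a r =>
        have := W.smul_mem r (hT a _ hx)
        rw [mTl_tmul, ← TensorProduct.tmul_smul, ← smul_mul_assoc, ← map_smul,
          Finsupp.smul_single, smul_eq_mul, mul_one] at this
        exact this
  have h2 : ∀ (p : Pev K) (l : Podd K), p ⊗ₜ l ∈ W := by
    intro p l
    induction p using MvPolynomial.induction_on with
    | C r =>
      rw [← mul_one (MvPolynomial.C r), ← MvPolynomial.smul_eq_C_mul, ← TensorProduct.smul_tmul']
      exact W.smul_mem _ (h1 l)
    | add p q hp hq => rw [TensorProduct.add_tmul]; exact W.add_mem hp hq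
    | mul_X p n hp => rw [mul_comm, ← mXl_tmul]; exact hX n _ hp
  rw [eq_top_iff]
  intro v _
  induction v using TensorProduct.induction_on with
  | zero => exact W.zero_mem
  | tmul p l => exact h2 p l
  | add v w hv hw => exact W.add_mem (hv trivial) (hw trivial)

def tp : R K := LaurentPolynomial.T 1
def tm : R K := LaurentPolynomial.T (-1)

theorem tp_tm : tp K * tm K = 1 := by
  unfold tp tm; rw [← LaurentPolynomial.T_add]; simp
theorem hb_eq : hb K = tp K * tp K := by
  unfold hb tp; rw [← LaurentPolynomial.T_add]; rfl
theorem cs_mul (x y : K) : cs K x * cs K y = cs K (x * y) := by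
  unfold cs; rw [map_mul]
theorem cs_one : cs K 1 = 1 := by unfold cs; rw [map_one]
theorem cs_two : cs K 2 = 2 := by unfold cs; rw [map_ofNat]

/-- coefficients of the modes -/
def bβ (k : ℤ) : R K := if 0 ≤ k then tp K else 0
def bα (k : ℤ) : R K := if 0 ≤ k then 0 else ((-k : ℤ) : R K) * tm K
def fβ (k : ℤ) : R K := if 1 ≤ k then tp K else if k = 0 then cs K s2⁻¹ * tp K else 0
def fα (k : ℤ) : R K := if 1 ≤ k then 0 else if k = 0 then cs K s2⁻¹ * tm K else tm K

def bosl (k : ℤ) : Module.End (R K) (SuperSpace K) :=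
  bβ K k • dXl K k.natAbs + bα K k • mXl K k.natAbs
def ferl (k : ℤ) : Module.End (R K) (SuperSpace K) :=
  fβ K s2 k • dTl K k.natAbs + fα K s2 k • mTl K k.natAbs

theorem bos_eq (k : ℤ) (v : SuperSpace K) : bos K k v = bosl K k v := by
  unfold bos bosl bβ bα
  split_ifs with h
  · have e : k.toNat = k.natAbs := by omega
    rw [e, zero_smul, add_zero]; rfl
  · have e : (-k).toNat = k.natAbs := by omega
    rw [e, zero_smul, zero_add]; rfl

theorem fer_eq (k : ℤ) (v : SuperSpace K) : fer K s2 k v = ferl K s2 k v := by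
  unfold fer ferl fβ fα
  split_ifs with h h'
  · have e : k.toNat = k.natAbs := by omega
    rw [e, zero_smul, add_zero]; rfl
  · subst h'
    show (cs K s2⁻¹ * tm K) • (mTl K 0 v + hb K • dTl K 0 v) =
      (cs K s2⁻¹ * tp K) • dTl K 0 v + (cs K s2⁻¹ * tm K) • mTl K 0 v
    rw [hb_eq]
    exact aux_fer (V := SuperSpace K) _ _ _ _ _ (tp_tm K)
  · have e : (-k).toNat = k.natAbs := by omega
    rw [e, zero_smul, zero_add]; rfl

theorem bcoef (j m : ℤ) : (bβ K j * bα K m - bα K j * bβ K m) *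
    (if j.natAbs = m.natAbs then (1 : R K) else 0) = if j = -m then (-m : R K) else 0 := by
  have h := tp_tm K
  unfold bβ bα
  by_cases h1 : j = -m
  · subst h1
    rw [if_pos (Int.natAbs_neg m), if_pos rfl]
    rcases lt_trichotomy m 0 with h0 | h0 | h0
    · rw [if_pos (by omega), if_neg (by omega), if_pos (by omega), if_neg (by omega)]
      push_cast
      linear_combination (-m : R K) * h
    · subst h0; simp
    · rw [if_neg (by omega), if_pos (by omega), if_neg (by omega), if_pos (by omega)]
      push_cast
      linear_combination (-m : R K) * h
  · rw [if_neg h1]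
    by_cases h2 : j.natAbs = m.natAbs
    · have : j = m := by omega
      subst this; ring
    · rw [if_neg h2, mul_zero]

theorem fcoef (hs2 : s2 ^ 2 = 2) (j m : ℤ) :
    (fβ K s2 j * fα K s2 m + fα K s2 j * fβ K s2 m) *
    (if j.natAbs = m.natAbs then (1 : R K) else 0) = if j = -m then (1 : R K) else 0 := by
  have h := tp_tm K
  have hs : 2 * (cs K s2⁻¹ * cs K s2⁻¹) = 1 := by
    rw [← cs_two, cs_mul, cs_mul, ← cs_one]
    congr 1
    have : s2 ≠ 0 := by rintro rfl; norm_num at hs2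
    field_simp
    exact hs2.symm
  unfold fβ fα
  by_cases h1 : j = -m
  · subst h1
    rw [if_pos (Int.natAbs_neg m), if_pos rfl]
    rcases lt_trichotomy m 0 with h0 | h0 | h0
    · rw [if_pos (by omega), if_neg (by omega), if_neg (by omega), if_pos (by omega)]
      linear_combination h
    · subst h0
      simp
      linear_combination h + (tp K * tm K) * hs
    · rw [if_neg (by omega), if_neg (by omega), if_pos (by omega), if_neg (by omega),
        if_neg (by omega), if_pos (by omega)]
      linear_combination h
  · rw [if_neg h1]
    by_cases h2 : j.natAbs = m.natAbs
    · have : j = m := by omega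
      subst this
      by_cases h3 : 1 ≤ j
      · simp [h3]
      · have : j ≠ 0 := by omega
        simp [h3, this]
    · rw [if_neg h2, mul_zero]

theorem bacoef (j : ℤ) (m : ℕ) : bβ K j * tm K *
    (if j.natAbs = m then (1 : R K) else 0) = if j = (m : ℤ) then (1 : R K) else 0 := by
  have h := tp_tm K
  unfold bβ
  by_cases h1 : j = m
  · subst h1; simp [h]
  · rw [if_neg h1]
    by_cases h2 : 0 ≤ j
    · rw [if_neg (show ¬ j.natAbs = m by omega), mul_zero]
    · simp [h2]

theorem fccoef (j : ℤ) (m : ℕ) : fβ K s2 j * tm K *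
    (if j.natAbs = m then (1 : R K) else 0) =
      if j = (m : ℤ) then (if m = 0 then cs K s2⁻¹ else 1) else 0 := by
  have h := tp_tm K
  unfold fβ
  by_cases h1 : j = m
  · subst h1
    rcases Nat.eq_zero_or_pos m with h2 | h2
    · subst h2; simp [mul_assoc, h]
    · rw [if_pos (by omega), if_pos (by omega), if_pos rfl, if_neg (by omega), h, mul_one]
  · rw [if_neg h1]
    by_cases h2 : 0 ≤ j
    · rw [if_neg (show ¬ j.natAbs = m by omega), mul_zero]
    · rw [if_neg (by omega), if_neg (by omega)]; simp

def theOsc (hs2 : s2 ^ 2 = 2) : OscRep (R K) (SuperSpace K) where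
  b := bosl K
  ψ := ferl K s2
  a m := tm K • mXl K m
  c m := tm K • mTl K m
  ε m := if m = 0 then cs K s2⁻¹ else 1
  Ω := 1 ⊗ₜ 1
  bb m j v := by
    rw [← bcoef]
    simp only [bosl, LinearMap.add_apply, LinearMap.smul_apply, map_add, map_smul, dm_X,
      dd_X K j.natAbs m.natAbs, mm_X K j.natAbs m.natAbs, eq_comm (a := m.natAbs) (b := j.natAbs)]
    module
  ψb m j v := by
    simp only [bosl, ferl, LinearMap.add_apply, LinearMap.smul_apply, map_add, map_smul, dX_dT,
      dX_mT, mX_dT, mX_mT]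
    module
  ψψ m j v := by
    rw [← fcoef K s2 hs2]
    simp only [ferl, LinearMap.add_apply, LinearMap.smul_apply, map_add, map_smul, dm_T,
      dd_T K j.natAbs m.natAbs, mm_T K j.natAbs m.natAbs, eq_comm (a := m.natAbs) (b := j.natAbs)]
    module
  ba m j v := by
    rw [← bacoef]
    simp only [bosl, LinearMap.add_apply, LinearMap.smul_apply, map_add, map_smul, dm_X,
      mm_X K j.natAbs m]
    module
  ψa m j v := by
    simp only [ferl, LinearMap.add_apply, LinearMap.smul_apply, map_add, map_smul, mX_dT, mX_mT]
    module
  ψc m j v := by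
    rw [← fccoef]
    simp only [ferl, LinearMap.add_apply, LinearMap.smul_apply, map_add, map_smul, dm_T,
      mm_T K j.natAbs m]
    module
  bc m j v := by
    simp only [bosl, LinearMap.add_apply, LinearMap.smul_apply, map_add, map_smul, dX_mT, mX_mT]
    module
  bΩ j hj := by
    simp only [bosl, bβ, bα, if_pos hj, zero_smul, add_zero, LinearMap.smul_apply, dXl_tmul]
    simp
  ψΩ j hj := by
    simp only [ferl, fβ, fα, if_pos hj, zero_smul, add_zero, LinearMap.smul_apply, dTl_tmul]
    simp
  cyc W h0 ha hc := cyc_aux K W h0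
    (fun k v hv => by
      have := W.smul_mem (tp K) (ha k v hv)
      rwa [LinearMap.smul_apply, smul_smul, tp_tm, one_smul] at this)
    (fun k v hv => by
      have := W.smul_mem (tp K) (hc k v hv)
      rwa [LinearMap.smul_apply, smul_smul, tp_tm, one_smul] at this)

def qq : R K := cs K 2⁻¹ * cs K 2⁻¹
def dd (N : ℤ) (D : ℤ → K) (i : ℤ) : R K := if i ≤ N - 1 then cs K (D i) else 0

theorem two_half : 2 * cs K 2⁻¹ = 1 := by
  rw [← cs_two, cs_mul, ← cs_one]
  congr 1
  norm_num

theorem Hop_eq (hs2 : s2 ^ 2 = 2) (N : ℤ) (D : ℤ → K) (i : ℤ) (hi : 0 ≤ i) (v : SuperSpace K) :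
    Hop K s2 N D i v = (theOsc K s2 hs2).Hl (hb K) (tm K) (qq K) N (dd K N D) i v := by
  set O := theOsc K s2 hs2 with hO
  have e1 : hb K • dXi K i v = hb K • tm K • O.b i v := by
    congr 1
    have e : i.toNat = i.natAbs := by omega
    show (if 0 ≤ i then dXl K i.toNat v else 0) = tm K • bosl K i v
    rw [if_pos hi, bosl, bβ, bα, if_pos hi, if_pos hi, zero_smul, add_zero, LinearMap.smul_apply,
      smul_smul, mul_comm, tp_tm, one_smul, e]
  have e2 : (∑ᶠ j : ℤ, nb K j (i + N - 1 - j) v) = O.LB (i + N - 1) v := by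
    refine finsum_congr fun j => ?_
    simp only [nb, OscRep.nbl]
    split_ifs <;> simp only [bos_eq, Module.End.mul_apply] <;> rfl
  have e3 : (∑ᶠ j : ℤ, (((2 * j + i + N - 1 : ℤ) : R K) * cs K (2 : K)⁻¹) •
          nf K s2 (-j) (i + N - 1 + j) v) = cs K (2 : K)⁻¹ • O.LF (i + N - 1) v := by
    have e4 : O.LF (i + N - 1) v =
      ∑ᶠ j : ℤ, (((2 * j + (i + N - 1) : ℤ) : R K) • O.nfl (-j) (i + N - 1 + j)) v := rfl
    rw [e4, smul_finsum' _ (O.nfl_fin (i + N - 1) v)]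
    refine finsum_congr fun j => ?_
    have e5 : nf K s2 (-j) (i + N - 1 + j) v = O.nfl (-j) (i + N - 1 + j) v := by
      simp only [nf, OscRep.nfl]
      split_ifs <;> simp only [fer_eq, Module.End.mul_apply, LinearMap.neg_apply] <;> rfl
    rw [e5, LinearMap.smul_apply, smul_smul, mul_comm, show 2 * j + i + N - 1 = 2 * j + (i + N - 1) by ring]
  have e6 : (if i ≤ N - 1 then (hb K * cs K (D i)) • v else 0) = (hb K * dd K N D i) • v := by
    unfold dd
    split_ifs
    · rfl
    · simp
  unfold Hop
  rw [e1, e2, e3, e6]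
  simp only [OscRep.Hl, OscRep.Q, LinearMap.add_apply, LinearMap.smul_apply, Module.End.one_apply, qq]
  exact aux_hop (V := SuperSpace K) _ _ _ _ _ _ _ _ (two_half K)

theorem Fop_eq (hs2 : s2 ^ 2 = 2) (N : ℤ) (i : ℤ) (hi : 1 ≤ i) (v : SuperSpace K) :
    Fop K s2 N i v = (theOsc K s2 hs2).Fl (hb K) (tm K) N i v := by
  set O := theOsc K s2 hs2 with hO
  have e1 : hb K • dTi K i v = hb K • tm K • O.ψ i v := by
    congr 1
    have e : i.toNat = i.natAbs := by omega
    show (if 1 ≤ i then dTl K i.toNat v else 0) = tm K • ferl K s2 i v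
    rw [if_pos hi, ferl, fβ, fα, if_pos hi, if_pos hi, zero_smul, add_zero, LinearMap.smul_apply,
      smul_smul, mul_comm, tp_tm, one_smul, e]
  have e2 : (∑ᶠ k : ℤ, bos K (i + N - 1 - k) (fer K s2 k v)) = O.G (i + N - 1) v := by
    refine finsum_congr fun j => ?_
    simp only [fer_eq, bos_eq, Module.End.mul_apply]
    rfl
  unfold Fop
  rw [e1, e2]
  simp only [OscRep.Fl, LinearMap.add_apply, LinearMap.smul_apply]
  module

end concrete

/-- For `N ≥ 1` and scalars `D_0, …, D_{N−1}`, the operators `H_i`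
(`i ∈ ℤ_{≥0}`) and `F_j` (`j ∈ ℤ_{≥1}`) satisfy the Ramond super Virasoro relations
`[H_i, H_{i′}] = ℏ(i−i′) H_{i+i′+N−1}`, `[H_i, F_j] = ℏ((i−N+1)/2 − j) F_{i+j+N−1}` and
`{F_j, F_{j′}} = 2ℏ H_{j+j′+N−1}` (a super quantum Airy structure with one extra
fermionic variable `θ⁰`). -/
theorem statement9 (hs2 : s2 ^ 2 = 2) (N : ℤ) (hN : 1 ≤ N) (D : ℤ → K) :
    (∀ i i' : ℤ, 0 ≤ i → 0 ≤ i' → ∀ v : SuperSpace K,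
      Hop K s2 N D i (Hop K s2 N D i' v) - Hop K s2 N D i' (Hop K s2 N D i v)
        = (hb K * ((i - i' : ℤ) : R K)) • Hop K s2 N D (i + i' + N - 1) v) ∧
    (∀ i j : ℤ, 0 ≤ i → 1 ≤ j → ∀ v : SuperSpace K,
      Hop K s2 N D i (Fop K s2 N j v) - Fop K s2 N j (Hop K s2 N D i v)
        = (hb K * ((i - N + 1 - 2 * j : ℤ) : R K) * cs K (2 : K)⁻¹) •
            Fop K s2 N (i + j + N - 1) v) ∧
    (∀ j j' : ℤ, 1 ≤ j → 1 ≤ j' → ∀ v : SuperSpace K,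
      Fop K s2 N j (Fop K s2 N j' v) + Fop K s2 N j' (Fop K s2 N j v)
        = (2 * hb K) • Hop K s2 N D (j + j' + N - 1) v) := by
  have hq : 4 * qq K = 1 := by
    have := two_half K
    unfold qq
    linear_combination (1 + 2 * cs K 2⁻¹) * this
  have hd : ∀ i, N ≤ i → dd K N D i = 0 := fun i hi => if_neg (by omega)
  refine ⟨fun i i' hi hi' v => ?_, fun i j hi hj v => ?_, fun j j' hj hj' v => ?_⟩
  · rw [Hop_eq K s2 hs2 N D i' hi', Hop_eq K s2 hs2 N D i hi, Hop_eq K s2 hs2 N D i hi,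
      Hop_eq K s2 hs2 N D i' hi', Hop_eq K s2 hs2 N D (i + i' + N - 1) (by omega)]
    exact OscRep.HH _ _ _ _ _ _ hq hN hd i i' hi hi' v
  · rw [Fop_eq K s2 hs2 N j hj, Hop_eq K s2 hs2 N D i hi, Hop_eq K s2 hs2 N D i hi,
      Fop_eq K s2 hs2 N j hj, Fop_eq K s2 hs2 N (i + j + N - 1) (by omega)]
    exact OscRep.HF _ _ _ _ _ _ hq hN i j hi hj v _ (two_half K)
  · rw [Fop_eq K s2 hs2 N j' hj', Fop_eq K s2 hs2 N j hj, Fop_eq K s2 hs2 N j hj,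
      Fop_eq K s2 hs2 N j' hj', Hop_eq K s2 hs2 N D (j + j' + N - 1) (by omega)]
    exact OscRep.FF _ _ _ _ _ _ hq hN hd j j' hj hj' v _ (two_half K)


end
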